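/- Let ζ be a primitive aperiodic binary substitution of constant length q ≥ 2 with ζ(0) starting with 0 and x = ζ^∞(0). Then for every integer ℓ ≥ 1 the limits P_ℓ(x,∞,ε₀) = lim_{n→∞} P_ℓ(x,n,ε₀) and P≥_ℓ(x,∞,ε₀) = lim_{n→∞} P≥_ℓ(x,n,ε₀) exist and satisfy P_ℓ(x,∞,ε₀) = dens(K_ℓ) and P≥_ℓ(x,∞,ε₀) = Σ_{l≥ℓ} dens(K_l) > 0; moreover dens(K_ℓ) > 0 for infinitely many ℓ. -/

import Mathlib

open Filter Topology MeasureTheory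

namespace RQA

/-- The standard metric on symbolic sequences over an alphabet `α`:
`ρ(x,y) = 2^{-min{i : x i ≠ y i}}` for `x ≠ y` and `ρ(x,x) = 0`. -/
noncomputable def seqDist {α : Type*} (x y : ℕ → α) : ℝ :=
  haveI := Classical.propDecidable (x = y)
  if x = y then 0 else (2 : ℝ) ^ (-((sInf {i : ℕ | x i ≠ y i} : ℕ) : ℤ))

/-- The (one-sided) shift on sequences. -/
def shift {α : Type*} (x : ℕ → α) : ℕ → α := fun i => x (i + 1)

/-- The embedded sequence `x^{(m)}`, a sequence over the alphabet `α^m`. -/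
def embedSeq {α : Type*} (m : ℕ) (x : ℕ → α) : ℕ → (Fin m → α) :=
  fun j t => x (j + (t : ℕ))

section RQAdefs

variable {X : Type*} (d : X → X → ℝ) (f : X → X) (x : X)

/-- The entry of the recurrence plot at `(i,j)` equals `1`. -/
def RPone (ε : ℝ) (i j : ℕ) : Prop := d (f^[i] x) (f^[j] x) ≤ ε

/-- `(i, j, l)` is a diagonal line in the recurrence plot `RP(x, n, ε)`. -/
def IsLine (n : ℕ) (ε : ℝ) (i j l : ℕ) : Prop :=
  1 ≤ l ∧ i + l ≤ n ∧ j + l ≤ n ∧ i ≠ j ∧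
  (∀ h, h < l → RPone d f x ε (i + h) (j + h)) ∧
  (0 < i → 0 < j → ¬ RPone d f x ε (i - 1) (j - 1)) ∧
  (max i j + l < n → ¬ RPone d f x ε (i + l) (j + l))

/-- `N_l(x, n, ε)`: the number of diagonal lines of length exactly `l`. -/
noncomputable def Nlines (n : ℕ) (ε : ℝ) (l : ℕ) : ℕ :=
  Set.ncard {p : ℕ × ℕ | IsLine d f x n ε p.1 p.2 l}

/-- `P_l(x, n, ε) = N_l/(n² − n)`. -/
noncomputable def Pline (n : ℕ) (ε : ℝ) (l : ℕ) : ℝ :=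
  (Nlines d f x n ε l : ℝ) / ((n : ℝ) ^ 2 - (n : ℝ))

/-- `P≥_ℓ(x, n, ε) = Σ_{l ≥ ℓ} P_l`. -/
noncomputable def PlineGe (n : ℕ) (ε : ℝ) (ℓ : ℕ) : ℝ :=
  ∑' k : ℕ, Pline d f x n ε (ℓ + k)

/-- The recurrence rate `RR_ℓ(x, n, ε) = Σ_{l ≥ ℓ} l · P_l`. -/
noncomputable def RRate (n : ℕ) (ε : ℝ) (ℓ : ℕ) : ℝ :=
  ∑' k : ℕ, ((ℓ + k : ℕ) : ℝ) * Pline d f x n ε (ℓ + k)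

/-- The determinism `DET_ℓ(x, n, ε) = RR_ℓ/RR_1`. -/
noncomputable def DETrm (n : ℕ) (ε : ℝ) (ℓ : ℕ) : ℝ :=
  RRate d f x n ε ℓ / RRate d f x n ε 1

/-- The average line length `L_ℓ(x, n, ε) = RR_ℓ/P≥_ℓ`. -/
noncomputable def LAvg (n : ℕ) (ε : ℝ) (ℓ : ℕ) : ℝ :=
  RRate d f x n ε ℓ / PlineGe d f x n ε ℓ

/-- The entropy of line lengths
`ENT_ℓ(x, n, ε) = log P≥_ℓ − (1/P≥_ℓ)·Σ_{l≥ℓ} P_l · log P_l` (with `0·log 0 = 0`). -/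
noncomputable def ENTln (n : ℕ) (ε : ℝ) (ℓ : ℕ) : ℝ :=
  Real.log (PlineGe d f x n ε ℓ) -
    (PlineGe d f x n ε ℓ)⁻¹ *
      ∑' k : ℕ, Pline d f x n ε (ℓ + k) * Real.log (Pline d f x n ε (ℓ + k))

/-- The correlation sum
`C_ℓ(x, n, ε) = n^{-2}·#{(i,j) ∈ [0,n)² : d_ℓ(f^i x, f^j x) ≤ ε}`,
where `d_ℓ` is the Bowen metric. -/
noncomputable def corrSum (ℓ n : ℕ) (ε : ℝ) : ℝ :=
  (Set.ncard {p : ℕ × ℕ | p.1 < n ∧ p.2 < n ∧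
      ∀ k, k < ℓ → d (f^[p.1 + k] x) (f^[p.2 + k] x) ≤ ε} : ℝ) / (n : ℝ) ^ 2

end RQAdefs

/-- The extension of a substitution to a morphism of the free monoid of finite words. -/
def substWord (ζ : Bool → List Bool) : List Bool → List Bool :=
  fun w => w.foldr (fun a r => ζ a ++ r) []

/-- `ζ` is a (binary) substitution of constant length `q ≥ 2`. -/
def IsConstLenSubst (ζ : Bool → List Bool) (q : ℕ) : Prop :=
  2 ≤ q ∧ ∀ a : Bool, (ζ a).length = q

/-- The language `L_ζ`: subwords of the words `ζ^k(a)`, `a ∈ A`, `k ≥ 1`. -/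
def substLang (ζ : Bool → List Bool) : Set (List Bool) :=
  {w | ∃ a : Bool, ∃ k : ℕ, 1 ≤ k ∧ w <:+: (substWord ζ)^[k] [a]}

/-- The substitution subshift `X_ζ`. -/
def SubstShift (ζ : Bool → List Bool) : Set (ℕ → Bool) :=
  {y | ∀ n : ℕ, (List.ofFn fun t : Fin n => y (t : ℕ)) ∈ substLang ζ}

/-- `ζ` is primitive. -/
def IsPrimitive (ζ : Bool → List Bool) : Prop :=
  ∃ k : ℕ, 1 ≤ k ∧ ∀ a b : Bool, b ∈ (substWord ζ)^[k] [a]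

/-- `ζ` is aperiodic: `X_ζ` contains a non-periodic sequence. -/
def IsAperiodic (ζ : Bool → List Bool) : Prop :=
  ∃ y ∈ SubstShift ζ, ∀ p : ℕ, 1 ≤ p → ∃ i : ℕ, y (i + p) ≠ y i

/-- The action of a constant length-`q` substitution on infinite sequences. -/
def substSeq (ζ : Bool → List Bool) (q : ℕ) (x : ℕ → Bool) : ℕ → Bool :=
  fun i => (ζ (x (i / q))).getD (i % q) false

/-- `(i, j, l)` is a line in the infinite symbolic recurrence plot `RP(x, ∞, ε₀)`. -/
def IsInfLine (x : ℕ → Bool) (i j l : ℕ) : Prop :=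
  1 ≤ l ∧ i ≠ j ∧ (∀ h, h < l → x (i + h) = x (j + h)) ∧
  (0 < i → 0 < j → x (i - 1) ≠ x (j - 1)) ∧ x (i + l) ≠ x (j + l)

/-- `K_l`: the set of starting points `(i,j)`, `i,j ≥ 1`, of inner lines of length `l`
in the infinite symbolic recurrence plot. -/
def Kset (x : ℕ → Bool) (l : ℕ) : Set (ℕ × ℕ) :=
  {p | 1 ≤ p.1 ∧ 1 ≤ p.2 ∧ IsInfLine x p.1 p.2 l}

/-- `#(M ∩ [0,n)²)/n²`. -/
noncomputable def densCount (M : Set (ℕ × ℕ)) (n : ℕ) : ℝ :=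
  (Set.ncard (M ∩ {p : ℕ × ℕ | p.1 < n ∧ p.2 < n}) : ℝ) / (n : ℝ) ^ 2

/-- `M ⊆ ℕ²` has asymptotic density `a`. -/
def HasDens (M : Set (ℕ × ℕ)) (a : ℝ) : Prop :=
  Tendsto (densCount M) atTop (𝓝 a)

/-- `δ_l(n) = #(K_l ∩ [1,n)²)/(n² − n)`. -/
noncomputable def deltaK (x : ℕ → Bool) (l n : ℕ) : ℝ :=
  (Set.ncard (Kset x l ∩ {p : ℕ × ℕ | p.1 < n ∧ p.2 < n}) : ℝ) / ((n : ℝ) ^ 2 - (n : ℝ))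

/-- `M` is a minimal subset of the subshift `Y`. -/
def IsMinimalSubset (Y M : Set (ℕ → Bool)) : Prop :=
  M ⊆ Y ∧ M.Nonempty ∧ IsClosed M ∧ (∀ z ∈ M, shift z ∈ M) ∧
  ∀ M' : Set (ℕ → Bool), M' ⊆ M → M'.Nonempty → IsClosed M' →
    (∀ z ∈ M', shift z ∈ M') → M' = M

end RQA

open RQA

namespace RQAProof

open Finset

lemma sum_block (φ : ℕ → ℝ) (Q n : ℕ) :
    ∑ i ∈ range (Q * n), φ i = ∑ s ∈ range n, ∑ r ∈ range Q, φ (Q * s + r) := by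
  induction n with
  | zero => simp
  | succ n ih => rw [Nat.mul_succ, Finset.sum_range_add, ih, Finset.sum_range_succ]

lemma sum_rem (φ : ℕ → ℝ) (hφ : ∀ i, |φ i| ≤ 1) (Q n : ℕ) (hQ : 0 < Q) :
    |∑ i ∈ range n, φ i - ∑ i ∈ range (Q * (n / Q)), φ i| ≤ Q := by
  have h1 : ∑ i ∈ range n, φ i
      = ∑ i ∈ range (Q * (n / Q)), φ i + ∑ r ∈ range (n % Q), φ (Q * (n / Q) + r) := by
    rw [← Finset.sum_range_add, Nat.div_add_mod]
  rw [h1, add_sub_cancel_left]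
  calc _ ≤ ∑ r ∈ range (n % Q), |φ (Q * (n / Q) + r)| := abs_sum_le_sum_abs _ _
    _ ≤ ∑ r ∈ range (n % Q), (1 : ℝ) := sum_le_sum fun _ _ => hφ _
    _ = ((n % Q : ℕ) : ℝ) := by simp
    _ ≤ Q := by exact_mod_cast (Nat.mod_lt _ hQ).le

def Approx (φ : ℕ → ℝ) (a ε : ℝ) : Prop :=
  ∃ C : ℝ, ∀ n : ℕ, |∑ i ∈ range n, φ i - a * n| ≤ ε * n + C

lemma approx_bound {φ : ℕ → ℝ} {a ε : ℝ} (h : Approx φ a ε) (δ : ℝ) (hδ : 0 < δ) :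
    ∀ᶠ n : ℕ in atTop, |(∑ i ∈ range n, φ i) / n - a| ≤ ε + δ := by
  obtain ⟨C, hC⟩ := h
  filter_upwards [eventually_gt_atTop 0, eventually_ge_atTop (Nat.ceil (C / δ))] with n hn hn2
  have hn' : (0 : ℝ) < n := by exact_mod_cast hn
  have h2 : C / δ ≤ n := (Nat.le_ceil _).trans (by exact_mod_cast hn2)
  have h3 : C ≤ δ * n := by rw [div_le_iff₀ hδ] at h2; linarith
  have h4 : (∑ i ∈ range n, φ i) / n - a = (∑ i ∈ range n, φ i - a * n) / n := by
    field_simp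
  rw [h4, abs_div, abs_of_pos hn', div_le_iff₀ hn']
  have := hC n
  nlinarith

lemma approx_tendsto {φ : ℕ → ℝ} {a : ℝ} (h : ∀ ε > 0, Approx φ a ε) :
    Tendsto (fun n : ℕ => (∑ i ∈ range n, φ i) / n) atTop (𝓝 a) := by
  rw [Metric.tendsto_nhds]
  intro ε hε
  filter_upwards [approx_bound (h (ε/4) (by positivity)) (ε/4) (by positivity)] with n hn
  rw [Real.dist_eq]; linarith

lemma approx_exists {φ : ℕ → ℝ} (h : ∀ ε > 0, ∃ a, Approx φ a ε) :
    ∃ f, Tendsto (fun n : ℕ => (∑ i ∈ range n, φ i) / n) atTop (𝓝 f) := by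
  apply cauchySeq_tendsto_of_complete
  rw [Metric.cauchySeq_iff']
  intro ε hε
  obtain ⟨a, ha⟩ := h (ε/8) (by positivity)
  obtain ⟨N, hN⟩ := eventually_atTop.1 (approx_bound ha (ε/8) (by positivity))
  refine ⟨N, fun n hn => ?_⟩
  have h1 := abs_le.1 (hN n hn)
  have h2 := abs_le.1 (hN N le_rfl)
  rw [Real.dist_eq, abs_lt]
  constructor <;> linarith

/-- indicator of the letter false -/
noncomputable def ind (x : ℕ → Bool) (i : ℕ) : ℝ := if x i = false then 1 else 0

lemma ind_abs (x : ℕ → Bool) (i : ℕ) : |ind x i| ≤ 1 := by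
  unfold ind; split_ifs <;> simp

lemma letters (x : ℕ → Bool) (q : ℕ) (hq : 2 ≤ q) (g : ℕ → Bool → Bool)
    (hg : ∀ s r, r < q → x (q * s + r) = g r (x s))
    (h0 : g 0 false = false) (h1 : ∃ r < q, g r true = false) :
    ∃ f > 0, ∀ ε > 0, Approx (ind x) f ε := by
  set a : ℕ := ((range q).filter fun r => g r false = false).card with ha
  set b : ℕ := ((range q).filter fun r => g r true = false).card with hb
  have ha1 : 1 ≤ a := card_pos.2 ⟨0, by simp [h0]; omega⟩
  have hb1 : 1 ≤ b := by
    obtain ⟨r, hr, hr'⟩ := h1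
    exact card_pos.2 ⟨r, by simp [hr, hr']⟩
  have haq : a ≤ q := (card_filter_le _ _).trans (by simp)
  have hbq : b ≤ q := (card_filter_le _ _).trans (by simp)
  have ha1' : (1:ℝ) ≤ a := by exact_mod_cast ha1
  have hb1' : (1:ℝ) ≤ b := by exact_mod_cast hb1
  have haq' : (a:ℝ) ≤ q := by exact_mod_cast haq
  have hbq' : (b:ℝ) ≤ q := by exact_mod_cast hbq
  have hq' : (2:ℝ) ≤ q := by exact_mod_cast hq
  have hden : (0:ℝ) < q - a + b := by linarith
  set f : ℝ := b / (q - a + b) with hf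
  have hfden : f * (q - a + b) = b := by rw [hf]; field_simp
  have hfpos : 0 < f := by positivity
  have hf1 : f ≤ 1 := by rw [hf, div_le_one hden]; linarith
  have hrec : ∀ n, ∑ i ∈ range (q * n), ind x i = (a - b) * ∑ i ∈ range n, ind x i + b * n := by
    intro n
    rw [sum_block]
    have : ∀ s, ∑ r ∈ range q, ind x (q * s + r) = (a - b) * ind x s + b := by
      intro s
      have : ∑ r ∈ range q, ind x (q * s + r)
          = ∑ r ∈ range q, if g r (x s) = false then (1:ℝ) else 0 := by
        refine sum_congr rfl fun r hr => ?_
        unfold ind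
        rw [hg s r (mem_range.1 hr)]
      rw [this, sum_boole]
      unfold ind
      cases hxs : x s
      · rw [← ha]; simp
      · rw [← hb]; simp
    simp_rw [this]
    rw [sum_add_distrib, ← mul_sum]; simp [mul_comm]
  have hk : ∀ k : ℕ, Approx (ind x) f (((q - 1 : ℝ) / q) ^ k * 2) := by
    intro k
    induction k with
    | zero =>
      refine ⟨0, fun n => ?_⟩
      have h1 : |∑ i ∈ range n, ind x i| ≤ n := by
        refine (abs_sum_le_sum_abs _ _).trans ((sum_le_sum fun i _ => ind_abs x i).trans ?_)
        simp
      have h2 : |f * n| ≤ n := by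
        rw [abs_of_nonneg (by positivity)]
        have : (0:ℝ) ≤ n := by positivity
        nlinarith
      have := abs_sub (∑ i ∈ range n, ind x i) (f * n)
      simp; linarith
    | succ k ih =>
      obtain ⟨C, hC⟩ := ih
      refine ⟨(q-1) * C + 2 * q, fun n => ?_⟩
      set c : ℝ := ((q - 1 : ℝ) / q) ^ k * 2
      have hc0 : 0 ≤ c := by
        have : (0:ℝ) ≤ q - 1 := by linarith
        positivity
      set m := n / q with hm
      have hmn : (q:ℝ) * m ≤ n := by exact_mod_cast Nat.mul_div_le n q
      have hmn2 : (n:ℝ) ≤ q * m + q := by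
        have h1 := Nat.div_add_mod n q
        have h2 := Nat.mod_lt n (show 0 < q by omega)
        exact_mod_cast (by omega : n ≤ q * (n/q) + q)
      have h1 := sum_rem (ind x) (ind_abs x) q n (by omega)
      rw [← hm, hrec m] at h1
      have h2 := hC m
      set S := ∑ i ∈ range m, ind x i
      have h3 : |((a:ℝ) - b) * (S - f * m)| ≤ (q - 1) * (c * m + C) := by
        rw [abs_mul]
        apply mul_le_mul _ h2 (abs_nonneg _) (by linarith)
        rw [abs_le]; constructor <;> linarith
      have h4 : ((a:ℝ) - b) * S + b * m - f * (q * m) = (a - b) * (S - f * m) := by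
        linear_combination (-(m:ℝ)) * hfden
      have h5 : |f * (q * m) - f * n| ≤ q := by
        rw [abs_le]; constructor <;> nlinarith
      have h6 : (q - 1) * (c * m) ≤ ((q - 1 : ℝ) / q) ^ (k+1) * 2 * n := by
        have : ((q - 1 : ℝ) / q) ^ (k+1) * 2 * n = (q - 1) * (c * (n / q)) := by
          rw [pow_succ]; ring
        rw [this]
        apply mul_le_mul_of_nonneg_left _ (by linarith)
        apply mul_le_mul_of_nonneg_left _ hc0
        rw [le_div_iff₀ (by linarith)]; linarith
      have e : ∑ i ∈ range n, ind x i - f * n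
        = (∑ i ∈ range n, ind x i - (((a:ℝ) - b) * S + b * m)) + ((a:ℝ) - b) * (S - f * m)
          + (f * (q * m) - f * n) := by rw [← h4]; ring
      rw [e]
      refine (abs_add_three _ _ _).trans ?_
      linarith
  refine ⟨f, hfpos, fun ε hε => ?_⟩
  have hlt : ((q - 1 : ℝ) / q) < 1 := by rw [div_lt_one (by linarith)]; linarith
  obtain ⟨k, hk'⟩ := exists_pow_lt_of_lt_one (show 0 < ε / 2 by positivity) hlt
  obtain ⟨C, hC⟩ := hk k
  refine ⟨C, fun n => (hC n).trans ?_⟩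
  have : (0:ℝ) ≤ n := by positivity
  nlinarith

lemma block_approx (x : ℕ → Bool) (f : ℝ) (hf : ∀ ε > 0, Approx (ind x) f ε)
    (φ : ℕ → ℝ) (hφ : ∀ i, |φ i| ≤ 1) (Q : ℕ) (hQ : 0 < Q) (ψ : ℕ → Bool → ℝ) (m : ℝ)
    (hψ : ∀ s, ∑ r ∈ range Q, |φ (Q * s + r) - ψ r (x s)| ≤ m)
    (ε : ℝ) (hε : m / Q < ε) : ∃ a, Approx φ a ε := by
  have hQ' : (0:ℝ) < Q := by exact_mod_cast hQ
  set T : Bool → ℝ := fun c => ∑ r ∈ range Q, ψ r c with hT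
  have hTx : ∀ s, T (x s) = T true + (T false - T true) * ind x s := by
    intro s
    unfold ind
    cases x s <;> simp
  set D := |T false - T true| with hD
  have hm0 : 0 ≤ m := (sum_nonneg fun _ _ => abs_nonneg _).trans (hψ 0)
  have hη : 0 < ε * Q - m := by rw [div_lt_iff₀ hQ'] at hε; linarith
  obtain ⟨C, hC⟩ := hf ((ε * Q - m) / (D + 1)) (by positivity)
  set δ := (ε * Q - m) / (D + 1) with hδ
  have hDδ : D * δ ≤ ε * Q - m := by
    have : δ * (D + 1) = ε * Q - m := by
      have : (0:ℝ) < D + 1 := by positivity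
      rw [hδ, div_mul_cancel₀ _ this.ne']
    have : 0 < δ := by positivity
    nlinarith
  set A := T true + (T false - T true) * f with hA
  refine ⟨A / Q, Q + D * C + |A|, fun n => ?_⟩
  set s := n / Q with hs
  have hmn : (Q:ℝ) * s ≤ n := by exact_mod_cast Nat.mul_div_le n Q
  have hmn2 : (n:ℝ) ≤ Q * s + Q := by
    have h1 := Nat.div_add_mod n Q
    have h2 := Nat.mod_lt n (show 0 < Q by omega)
    exact_mod_cast (by omega : n ≤ Q * (n/Q) + Q)
  have h1 := sum_rem φ hφ Q n hQ
  rw [← hs] at h1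
  have h2 : |∑ i ∈ range (Q * s), φ i - ∑ t ∈ range s, T (x t)| ≤ m * s := by
    rw [sum_block, ← sum_sub_distrib]
    refine (abs_sum_le_sum_abs _ _).trans ?_
    have : ∀ t ∈ range s, |∑ r ∈ range Q, φ (Q * t + r) - T (x t)| ≤ m := by
      intro t _
      rw [hT, ← sum_sub_distrib]
      exact (abs_sum_le_sum_abs _ _).trans (hψ t)
    refine (sum_le_sum this).trans ?_
    simp [mul_comm]
  have h3 : ∑ t ∈ range s, T (x t) - A * s
      = (T false - T true) * (∑ t ∈ range s, ind x t - f * s) := by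
    simp_rw [hTx]
    rw [sum_add_distrib, ← mul_sum]; simp [hA]; ring
  have h4 : |∑ t ∈ range s, T (x t) - A * s| ≤ D * (δ * s + C) := by
    rw [h3, abs_mul]
    exact mul_le_mul_of_nonneg_left (hC s) (abs_nonneg _)
  have h5 : |A * s - A / Q * n| ≤ |A| := by
    have : A * s - A / Q * n = A * ((Q * s - n) / Q) := by field_simp
    rw [this, abs_mul]
    have h : |((Q:ℝ) * s - n) / Q| ≤ (1:ℝ) := by
      rw [abs_div, abs_of_pos hQ', div_le_one hQ', abs_le]; constructor <;> linarith
    nlinarith [abs_nonneg A]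
  have e : ∑ i ∈ range n, φ i - A / Q * n
    = ((∑ i ∈ range n, φ i - ∑ i ∈ range (Q * s), φ i)
      + (∑ i ∈ range (Q * s), φ i - ∑ t ∈ range s, T (x t)))
      + (∑ t ∈ range s, T (x t) - A * s) + (A * s - A / Q * n) := by ring
  rw [e]
  refine (abs_add_three _ _ _).trans ?_
  have h6 := abs_add_le (∑ i ∈ range n, φ i - ∑ i ∈ range (Q * s), φ i)
    (∑ i ∈ range (Q * s), φ i - ∑ t ∈ range s, T (x t))
  have h7 : (s:ℝ) * (m + D * δ) ≤ ε * n := by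
    have hs0 : (0:ℝ) ≤ s := by positivity
    have hε0 : 0 < ε := lt_of_le_of_lt (by positivity) hε
    nlinarith
  nlinarith

/-- word of length m at position i -/
def W (x : ℕ → Bool) (m i : ℕ) : Fin m → Bool := fun t => x (i + t)

def G (g : ℕ → Bool → Bool) (q : ℕ) : ℕ → ℕ → Bool → Bool
  | 0, _, a => a
  | k+1, r, a => g (r % q) (G g q k (r / q) a)

lemma G_spec (x : ℕ → Bool) (q : ℕ) (hq : 2 ≤ q) (g : ℕ → Bool → Bool)
    (hg : ∀ s r, r < q → x (q * s + r) = g r (x s)) (k : ℕ) :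
    ∀ s r, r < q ^ k → x (q ^ k * s + r) = G g q k r (x s) := by
  induction k with
  | zero => intro s r hr; simp at hr; simp [G, hr]
  | succ k ih =>
    intro s r hr
    have h1 : r / q < q ^ k := by
      apply Nat.div_lt_of_lt_mul; rw [pow_succ] at hr; linarith
    have h2 : q ^ (k+1) * s + r = q * (q ^ k * s + r / q) + r % q := by
      conv_lhs => rw [← Nat.div_add_mod r q]
      ring
    rw [h2, hg _ _ (Nat.mod_lt _ (by omega)), ih s _ h1]
    rfl

noncomputable def F (x : ℕ → Bool) {m : ℕ} (w : Fin m → Bool) (n : ℕ) : ℕ :=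
  ((range n).filter fun i => W x m i = w).card

lemma freq_exists (x : ℕ → Bool) (q : ℕ) (hq : 2 ≤ q) (g : ℕ → Bool → Bool)
    (hg : ∀ s r, r < q → x (q * s + r) = g r (x s)) (f : ℝ)
    (hf : ∀ ε > 0, Approx (ind x) f ε) {m : ℕ} (w : Fin m → Bool) :
    ∃ c, Tendsto (fun n : ℕ => (F x w n : ℝ) / n) atTop (𝓝 c) := by
  have e : ∀ n, (F x w n : ℝ) = ∑ i ∈ range n, if W x m i = w then (1:ℝ) else 0 := by
    intro n; rw [sum_boole, F]
  simp_rw [e]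
  apply approx_exists
  intro ε hε
  obtain ⟨k, hk⟩ : ∃ k : ℕ, (m:ℝ) / ε < (q:ℝ) ^ k :=
    pow_unbounded_of_one_lt _ (by exact_mod_cast (by omega : 1 < q))
  refine block_approx x f hf _ ?_ (q ^ k) (by positivity)
    (fun r c => if (fun t : Fin m => G g q k (r + t) c) = w then 1 else 0) m ?_ ε ?_
  · intro i; split_ifs <;> simp
  · intro s
    calc _ ≤ ∑ r ∈ range (q ^ k), if q ^ k - m ≤ r then (1:ℝ) else 0 := by
          refine sum_le_sum fun r hr => ?_
          rw [mem_range] at hr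
          by_cases h1 : q ^ k - m ≤ r
          · rw [if_pos h1]; split_ifs <;> simp
          · have : W x m (q ^ k * s + r) = fun t : Fin m => G g q k (r + t) (x s) := by
              funext t
              have := t.2
              rw [W, add_assoc, G_spec x q hq g hg k s (r + t) (by omega)]
            rw [this]; simp [h1]
      _ ≤ m := by
          rw [sum_boole]
          have : (filter (fun r => q ^ k - m ≤ r) (range (q ^ k))) ⊆ Ico (q ^ k - m) (q ^ k) := by
            intro r; simp; omega
          have h := card_le_card this
          rw [Nat.card_Ico] at h
          exact_mod_cast h.trans (by omega)
  · push_cast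
    rw [div_lt_iff₀ hε] at hk
    rw [div_lt_iff₀ (by positivity)]; linarith

lemma freq_pos (x : ℕ → Bool) (hx0 : x 0 = false) (q : ℕ) (hq : 2 ≤ q) (g : ℕ → Bool → Bool)
    (hg : ∀ s r, r < q → x (q * s + r) = g r (x s)) (f : ℝ) (hf0 : 0 < f)
    (hf : ∀ ε > 0, Approx (ind x) f ε) {m : ℕ} (i₀ : ℕ) (c : ℝ)
    (hc : Tendsto (fun n : ℕ => (F x (W x m i₀) n : ℝ) / n) atTop (𝓝 c)) : 0 < c := by
  obtain ⟨k, hk⟩ : ∃ k : ℕ, i₀ + m < q ^ k := ⟨i₀ + m, Nat.lt_pow_self (by omega)⟩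
  set Q := q ^ k with hQ
  have hQ0 : 0 < Q := by omega
  have h1 := approx_tendsto hf
  have h2 : Tendsto (fun n : ℕ => (F x (W x m i₀) (Q * n) : ℝ) / ((Q * n : ℕ):ℝ)) atTop (𝓝 c) :=
    hc.comp (tendsto_id.const_mul_atTop' hQ0)
  have h3 : f / Q ≤ c := by
    refine le_of_tendsto_of_tendsto' (h1.div_const (Q:ℝ)) h2 fun n => ?_
    rw [div_div]
    have e : ((Q * n : ℕ):ℝ) = n * Q := by push_cast; ring
    rw [e]
    gcongr
    have : ∑ i ∈ range n, ind x i = (((range n).filter fun i => x i = false).card : ℝ) := by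
      rw [← sum_boole]; rfl
    rw [this]
    norm_cast
    refine card_le_card_of_injOn (fun s => Q * s + i₀) ?_ ?_
    · intro s hs
      simp only [coe_filter, mem_range, Set.mem_ofPred_eq] at hs ⊢
      constructor
      · have : Q * (s + 1) ≤ Q * n := Nat.mul_le_mul_left _ hs.1
        rw [mul_add] at this; omega
      · funext t
        have := t.2
        rw [W, W, add_assoc, G_spec x q hq g hg k s (i₀ + t) (by omega), hs.2]
        have := G_spec x q hq g hg k 0 (i₀ + t) (by omega)
        rw [hx0] at this
        simpa using this.symm
    · intro s _ t _ hst
      simp only [add_left_inj] at hst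
      exact Nat.eq_of_mul_eq_mul_left hQ0 hst
  have : 0 < f / Q := by positivity
  linarith

end RQAProof
namespace RQAProof

open Finset

def SS (x : ℕ → Bool) (l : ℕ) (p : ℕ × ℕ) : Prop :=
  x p.1 ≠ x p.2 ∧ ∀ h, h < l → x (p.1 + 1 + h) = x (p.2 + 1 + h)

open Classical in
noncomputable def sF (x : ℕ → Bool) (l n : ℕ) : Finset (ℕ × ℕ) :=
  (range n ×ˢ range n).filter (SS x l)

lemma mem_sF (x : ℕ → Bool) (l n : ℕ) (p : ℕ × ℕ) :
    p ∈ sF x l n ↔ (p.1 < n ∧ p.2 < n) ∧ SS x l p := by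
  simp [sF]

open Classical in
lemma sF_card (x : ℕ → Bool) (l n : ℕ) :
    (sF x l n).card = ∑ uv ∈ (univ : Finset ((Fin (l+1) → Bool) × (Fin (l+1) → Bool))).filter
      (fun uv => uv.1 0 ≠ uv.2 0 ∧ ∀ h : Fin l, uv.1 h.succ = uv.2 h.succ),
      F x uv.1 n * F x uv.2 n := by
  rw [card_eq_sum_card_fiberwise (f := fun p : ℕ × ℕ => (W x (l+1) p.1, W x (l+1) p.2))
    (t := (univ : Finset ((Fin (l+1) → Bool) × (Fin (l+1) → Bool))).filter
      (fun uv => uv.1 0 ≠ uv.2 0 ∧ ∀ h : Fin l, uv.1 h.succ = uv.2 h.succ))]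
  · refine sum_congr rfl fun uv huv => ?_
    rw [F, F, ← card_product]
    congr 1
    ext ⟨i, j⟩
    simp only [mem_filter, mem_sF, mem_product, mem_range, mem_univ, true_and] at huv ⊢
    constructor
    · rintro ⟨⟨⟨h1, h2⟩, h3⟩, h4⟩
      exact ⟨⟨h1, congrArg Prod.fst h4⟩, ⟨h2, congrArg Prod.snd h4⟩⟩
    · rintro ⟨⟨h1, h2⟩, ⟨h3, h4⟩⟩
      refine ⟨⟨⟨h1, h3⟩, ?_⟩, Prod.ext h2 h4⟩
      rw [← h2, ← h4] at huv
      refine ⟨by simpa [W] using huv.1, fun h hh => ?_⟩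
      have := huv.2 ⟨h, hh⟩
      simp only [W, Fin.succ_mk] at this
      rw [show i + 1 + h = i + (h + 1) by ring, show j + 1 + h = j + (h + 1) by ring]
      exact this
  · intro p hp
    have hp := (mem_sF x l n p).1 hp
    simp only [coe_filter, mem_univ, true_and]
    refine ⟨by simpa [W] using hp.2.1, fun h => ?_⟩
    have := hp.2.2 h h.2
    simp only [W, Fin.val_succ]
    rw [show p.1 + (h + 1) = p.1 + 1 + h by ring, show p.2 + (h + 1) = p.2 + 1 + h by ring]
    exact this

lemma sF_tendsto (x : ℕ → Bool)
    (hx : ∀ (m : ℕ) (w : Fin m → Bool), ∃ c, Tendsto (fun n : ℕ => (F x w n : ℝ) / n) atTop (𝓝 c))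
    (hpos : ∀ (m i : ℕ) (c : ℝ),
      Tendsto (fun n : ℕ => (F x (W x m i) n : ℝ) / n) atTop (𝓝 c) → 0 < c) (l : ℕ) :
    ∃ E, Tendsto (fun n : ℕ => ((sF x l n).card : ℝ) / (n:ℝ)^2) atTop (𝓝 E) ∧
      ((∃ p, SS x l p) → 0 < E) := by
  classical
  choose c hc using hx
  have hc0 : ∀ m w, 0 ≤ c m w := fun m w =>
    ge_of_tendsto' (hc m w) fun n => by positivity
  refine ⟨∑ uv ∈ (univ : Finset ((Fin (l+1) → Bool) × (Fin (l+1) → Bool))).filter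
      (fun uv => uv.1 0 ≠ uv.2 0 ∧ ∀ h : Fin l, uv.1 h.succ = uv.2 h.succ),
      c _ uv.1 * c _ uv.2, ?_, ?_⟩
  · have : ∀ n : ℕ, ((sF x l n).card : ℝ) / (n:ℝ)^2 =
      ∑ uv ∈ (univ : Finset ((Fin (l+1) → Bool) × (Fin (l+1) → Bool))).filter
      (fun uv => uv.1 0 ≠ uv.2 0 ∧ ∀ h : Fin l, uv.1 h.succ = uv.2 h.succ),
      ((F x uv.1 n : ℝ) / n) * ((F x uv.2 n : ℝ) / n) := by
      intro n
      rw [sF_card]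
      push_cast
      rw [sum_div]
      refine sum_congr rfl fun uv _ => ?_
      rw [div_mul_div_comm, sq]
    simp_rw [this]
    exact tendsto_finsetSum _ fun uv _ => (hc _ _).mul (hc _ _)
  · rintro ⟨p, hp⟩
    refine sum_pos' (fun uv _ => mul_nonneg (hc0 _ _) (hc0 _ _))
      ⟨(W x (l+1) p.1, W x (l+1) p.2), ?_, mul_pos (hpos _ _ _ (hc _ _)) (hpos _ _ _ (hc _ _))⟩
    simp only [mem_filter, mem_univ, true_and]
    refine ⟨by simpa [W] using hp.1, fun h => ?_⟩
    have := hp.2 h h.2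
    simp only [W, Fin.val_succ]
    rw [show p.1 + (h + 1) = p.1 + 1 + h by ring, show p.2 + (h + 1) = p.2 + 1 + h by ring]
    exact this

lemma sF_bound (x : ℕ → Bool) (l n : ℕ) : (sF x l n).card * l ≤ (n + l) ^ 2 := by
  have h1 : (sF x l n).card * l = (sF x l n ×ˢ range l).card := by rw [card_product, card_range]
  have h2 : (n + l) ^ 2 = (range (n + l) ×ˢ range (n + l)).card := by
    rw [card_product, card_range, sq]
  rw [h1, h2]
  refine card_le_card_of_injOn (fun t => (t.1.1 + t.2, t.1.2 + t.2)) ?_ ?_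
  · rintro ⟨⟨i, j⟩, h⟩ ht
    simp only [coe_product, Set.mem_prod, mem_coe, mem_sF, mem_range] at ht ⊢
    omega
  · have key : ∀ i j h i' j' h', SS x l (i, j) → SS x l (i', j') → h < l → h' < l →
        i + h = i' + h' → j + h = j' + h' → ¬ h < h' := by
      intro i j h i' j' h' hs hs' hl hl' e1 e2 hlt
      have := hs'.2 (h' - h - 1) (by omega)
      simp only at this
      rw [show i' + 1 + (h' - h - 1) = i by omega, show j' + 1 + (h' - h - 1) = j by omega] at this
      exact hs.1 this
    rintro ⟨⟨i, j⟩, h⟩ ht ⟨⟨i', j'⟩, h'⟩ ht' e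
    simp only [coe_product, Set.mem_prod, mem_coe, mem_sF, mem_range] at ht ht'
    simp only [Prod.mk.injEq] at e ⊢
    have k1 := key i j h i' j' h' ht.1.2 ht'.1.2 ht.2 ht'.2 e.1 e.2
    have k2 := key i' j' h' i j h ht'.1.2 ht.1.2 ht'.2 ht.2 e.1.symm e.2.symm
    omega

lemma shift_iter (x : ℕ → Bool) (i : ℕ) : ∀ j, (shift^[i] x) j = x (i + j) := by
  induction i with
  | zero => simp
  | succ i ih => intro j; rw [Function.iterate_succ_apply', shift, ih]; congr 1; ring

lemma seqDist_le (u v : ℕ → Bool) : seqDist u v ≤ 1/2 ↔ u 0 = v 0 := by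
  unfold seqDist
  by_cases h : u = v
  · simp [h]
  · rw [if_neg h]
    have hne : {i : ℕ | u i ≠ v i}.Nonempty := by
      by_contra hc
      apply h; funext i; by_contra hi; exact hc ⟨i, hi⟩
    constructor
    · intro hle
      by_contra h0
      have : sInf {i : ℕ | u i ≠ v i} = 0 := Nat.sInf_eq_zero.2 (Or.inl h0)
      rw [this] at hle
      norm_num at hle
    · intro h0
      have h1 : 1 ≤ sInf {i : ℕ | u i ≠ v i} := by
        rw [Nat.one_le_iff_ne_zero]
        intro hc
        have := Nat.sInf_mem hne
        rw [hc] at this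
        exact this h0
      calc (2:ℝ) ^ (-((sInf {i : ℕ | u i ≠ v i} : ℕ) : ℤ)) ≤ (2:ℝ) ^ (-1 : ℤ) := by
            apply zpow_le_zpow_right₀ (by norm_num)
            have : (1:ℤ) ≤ ((sInf {i : ℕ | u i ≠ v i} : ℕ) : ℤ) := by exact_mod_cast h1
            linarith
        _ = 1/2 := by norm_num

lemma RPone_iff (x : ℕ → Bool) (i j : ℕ) : RPone seqDist shift x (1/2) i j ↔ x i = x j := by
  rw [RPone, seqDist_le, shift_iter, shift_iter]; simp

/-- starts of lines of length at least l -/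
def TT (x : ℕ → Bool) (n l : ℕ) (p : ℕ × ℕ) : Prop :=
  p.1 + l ≤ n ∧ p.2 + l ≤ n ∧ p.1 ≠ p.2 ∧ (∀ h, h < l → x (p.1 + h) = x (p.2 + h)) ∧
  (0 < p.1 → 0 < p.2 → x (p.1 - 1) ≠ x (p.2 - 1))

open Classical in
noncomputable def tF (x : ℕ → Bool) (n l : ℕ) : Finset (ℕ × ℕ) :=
  (range (n+1) ×ˢ range (n+1)).filter (TT x n l)

lemma mem_tF (x : ℕ → Bool) (n l : ℕ) (p : ℕ × ℕ) : p ∈ tF x n l ↔ TT x n l p := by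
  simp only [tF, mem_filter, mem_product, mem_range, and_iff_right_iff_imp]
  intro h
  have h1 := h.1
  have h2 := h.2.1
  omega

lemma isLine_iff (x : ℕ → Bool) (n l : ℕ) (hl : 1 ≤ l) (p : ℕ × ℕ) :
    IsLine seqDist shift x n (1/2) p.1 p.2 l ↔ TT x n l p ∧ ¬ TT x n (l+1) p := by
  simp only [IsLine, RPone_iff, TT]
  constructor
  · rintro ⟨_, h1, h2, h3, h4, h5, h6⟩
    refine ⟨⟨h1, h2, h3, h4, h5⟩, ?_⟩
    rintro ⟨k1, k2, _, k4, _⟩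
    exact h6 (by omega) (k4 l (by omega))
  · rintro ⟨⟨h1, h2, h3, h4, h5⟩, h6⟩
    refine ⟨hl, h1, h2, h3, h4, h5, fun hm he => h6 ⟨by omega, by omega, h3, ?_, h5⟩⟩
    intro h hh
    rcases Nat.lt_succ_iff_lt_or_eq.1 hh with h' | rfl
    · exact h4 h h'
    · exact he

lemma tF_anti (x : ℕ → Bool) (n l : ℕ) : tF x n (l+1) ⊆ tF x n l := by
  intro p hp
  rw [mem_tF] at hp ⊢
  obtain ⟨h1, h2, h3, h4, h5⟩ := hp
  exact ⟨by omega, by omega, h3, fun h hh => h4 h (by omega), h5⟩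

lemma Nlines_eq (x : ℕ → Bool) (n l : ℕ) (hl : 1 ≤ l) :
    (Nlines seqDist shift x n (1/2) l : ℝ) = (tF x n l).card - (tF x n (l+1)).card := by
  have : {p : ℕ × ℕ | IsLine seqDist shift x n (1/2) p.1 p.2 l}
      = ((tF x n l \ tF x n (l+1) : Finset (ℕ × ℕ)) : Set (ℕ × ℕ)) := by
    ext p
    simp only [Finset.coe_sdiff, Set.mem_sdiff, mem_coe, mem_tF]
    exact isLine_iff x n l hl p
  rw [Nlines, this, Set.ncard_coe_finset, card_sdiff_of_subset (tF_anti x n l),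
    Nat.cast_sub (card_le_card (tF_anti x n l))]

lemma PlineGe_eq (x : ℕ → Bool) (n l : ℕ) (hl : 1 ≤ l) :
    PlineGe seqDist shift x n (1/2) l = ((tF x n l).card : ℝ) / ((n:ℝ)^2 - n) := by
  have hz : ∀ k, n < k → (tF x n k).card = 0 := by
    intro k hk
    rw [card_eq_zero, eq_empty_iff_forall_notMem]
    intro p hp
    rw [mem_tF] at hp
    have := hp.1
    omega
  unfold PlineGe Pline
  rw [tsum_eq_sum (s := range (n+1))]
  · rw [← sum_div]
    congr 1
    have : ∀ k, (Nlines seqDist shift x n (1/2) (l+k) : ℝ)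
        = (fun k => ((tF x n (l+k)).card : ℝ)) k - (fun k => ((tF x n (l+k)).card : ℝ)) (k+1) :=
      fun k => Nlines_eq x n (l+k) (by omega)
    simp_rw [this]
    rw [sum_range_sub']
    simp only [add_zero]
    rw [hz (l + (n+1)) (by omega)]; simp
  · intro k hk
    rw [mem_range] at hk
    rw [Nlines_eq x n (l+k) (by omega), hz _ (by omega), hz _ (by omega)]; simp

lemma tF_lower (x : ℕ → Bool) (n l : ℕ) : (sF x l (n - l)).card ≤ (tF x n l).card := by
  refine card_le_card_of_injOn (fun p => (p.1+1, p.2+1)) ?_ ?_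
  · rintro ⟨i, j⟩ hp
    rw [mem_coe, mem_sF] at hp
    rw [mem_coe, mem_tF]
    obtain ⟨⟨h1, h2⟩, h3, h4⟩ := hp
    simp only at h1 h2 h3 h4
    refine ⟨by simp only; omega, by simp only; omega, ?_, h4, ?_⟩
    · simp only
      intro h
      apply h3
      rw [Nat.succ_injective h]
    · simpa using h3
  · rintro ⟨i, j⟩ _ ⟨i', j'⟩ _ h
    simpa using h

lemma tF_upper (x : ℕ → Bool) (n l : ℕ) : (tF x n l).card ≤ (sF x l n).card + 2 * (n+1) := by
  have hsub : tF x n l ⊆ (sF x l n).image (fun p => (p.1+1, p.2+1)) ∪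
      ((range (n+1)).image (fun i => (i, 0)) ∪ (range (n+1)).image (fun i => (0, i))) := by
    rintro ⟨i, j⟩ hp
    rw [mem_tF] at hp
    obtain ⟨h1, h2, h3, h4, h5⟩ := hp
    simp only at h1 h2 h3 h4 h5
    simp only [mem_union, mem_image, mem_range]
    rcases Nat.eq_zero_or_pos j with rfl | hj
    · exact Or.inr (Or.inl ⟨i, by omega, rfl⟩)
    rcases Nat.eq_zero_or_pos i with rfl | hi
    · exact Or.inr (Or.inr ⟨j, by omega, rfl⟩)
    refine Or.inl ⟨(i-1, j-1), ?_, ?_⟩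
    · rw [mem_sF]
      refine ⟨⟨by simp only; omega, by simp only; omega⟩, h5 hi hj, ?_⟩
      simp only
      rw [Nat.sub_add_cancel hi, Nat.sub_add_cancel hj]
      exact h4
    · simp only [Prod.mk.injEq]; omega
  refine (card_le_card hsub).trans ((card_union_le _ _).trans ?_)
  have h1 := card_union_le ((range (n+1)).image (fun i => (i, 0)))
    ((range (n+1)).image (fun i => (0, i)))
  have h2 : ((range (n+1)).image (fun i => (i, 0))).card ≤ n + 1 :=
    card_image_le.trans (by simp)
  have h3 : ((range (n+1)).image (fun i => (0, i))).card ≤ n + 1 :=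
    card_image_le.trans (by simp)
  have h4 : ((sF x l n).image (fun p => (p.1+1, p.2+1))).card ≤ (sF x l n).card := card_image_le
  omega

lemma ratio (a : ℕ) : Tendsto (fun n : ℕ => (((n - a : ℕ) : ℝ))^2 / (n:ℝ)^2) atTop (𝓝 1) := by
  have h1 : Tendsto (fun n : ℕ => ((a:ℝ) / n)) atTop (𝓝 0) := tendsto_const_div_atTop_nhds_zero_nat _
  have h2 : Tendsto (fun n : ℕ => (1 - (a:ℝ) / n)^2) atTop (𝓝 1) := by
    simpa using (h1.const_sub 1).pow 2
  refine h2.congr' ?_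
  filter_upwards [eventually_gt_atTop a] with n hn
  have : (0:ℝ) < n := by exact_mod_cast (by omega : 0 < n)
  rw [Nat.cast_sub hn.le]; field_simp

lemma ratio2 : Tendsto (fun n : ℕ => (n:ℝ)^2 / ((n:ℝ)^2 - n)) atTop (𝓝 1) := by
  have h1 : Tendsto (fun n : ℕ => ((1:ℝ) / n)) atTop (𝓝 0) := tendsto_const_div_atTop_nhds_zero_nat _
  have h2 : Tendsto (fun n : ℕ => (1 - (1:ℝ) / n)⁻¹) atTop (𝓝 1) := by
    simpa using (h1.const_sub 1).inv₀ (by norm_num)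
  refine h2.congr' ?_
  filter_upwards [eventually_gt_atTop 1] with n hn
  have h : (1:ℝ) < n := by exact_mod_cast hn
  have h3 : (n:ℝ) - 1 ≠ 0 := by linarith
  have h4 : (n:ℝ)^2 - n ≠ 0 := by
    rw [sq, ← mul_sub_one]; exact mul_ne_zero (by linarith) h3
  have h5 : 1 - 1 / (n:ℝ) ≠ 0 := by
    rw [one_sub_div (by linarith)]; exact div_ne_zero h3 (by linarith)
  field_simp

lemma shifted (u : ℕ → ℝ) (E : ℝ) (h : Tendsto (fun n : ℕ => u n / (n:ℝ)^2) atTop (𝓝 E)) (a : ℕ) :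
    Tendsto (fun n : ℕ => u (n - a) / (n:ℝ)^2) atTop (𝓝 E) := by
  have h1 := (h.comp (tendsto_sub_atTop_nat a)).mul (ratio a)
  rw [mul_one] at h1
  refine h1.congr' ?_
  filter_upwards [eventually_gt_atTop a] with n hn
  have : (0:ℝ) < ((n - a : ℕ) : ℝ) := by exact_mod_cast (by omega : 0 < n - a)
  simp only [Function.comp]
  field_simp

lemma tF_tendsto (x : ℕ → Bool) (l : ℕ) (E : ℝ)
    (h : Tendsto (fun n : ℕ => ((sF x l n).card : ℝ) / (n:ℝ)^2) atTop (𝓝 E)) :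
    Tendsto (fun n : ℕ => ((tF x n l).card : ℝ) / ((n:ℝ)^2 - n)) atTop (𝓝 E) := by
  have h1 : Tendsto (fun n : ℕ => ((tF x n l).card : ℝ) / (n:ℝ)^2) atTop (𝓝 E) := by
    have hu : Tendsto (fun n : ℕ => ((sF x l n).card : ℝ) / (n:ℝ)^2 + 4 / n) atTop (𝓝 E) := by
      simpa using h.add (tendsto_const_div_atTop_nhds_zero_nat (4:ℝ))
    refine tendsto_of_tendsto_of_tendsto_of_le_of_le'
      (shifted (fun n => ((sF x l n).card : ℝ)) E h l) hu ?_ ?_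
    · filter_upwards with n
      have := tF_lower x n l
      exact div_le_div_of_nonneg_right (by exact_mod_cast this) (by positivity)
    · filter_upwards [eventually_gt_atTop 0] with n hn
      have hn' : (1:ℝ) ≤ n := by exact_mod_cast hn
      have : ((sF x l n).card : ℝ) / (n:ℝ)^2 + 4 / n = ((sF x l n).card + 4 * n) / (n:ℝ)^2 := by
        field_simp
      rw [this]
      gcongr
      have h2 : ((tF x n l).card : ℝ) ≤ (sF x l n).card + 2 * (n+1) := by
        exact_mod_cast tF_upper x n l
      linarith
  have h2 := h1.mul ratio2
  rw [mul_one] at h2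
  refine h2.congr' ?_
  filter_upwards [eventually_gt_atTop 0] with n hn
  have hn' : (0:ℝ) < n := by exact_mod_cast hn
  field_simp

lemma sF_anti (x : ℕ → Bool) (l n : ℕ) : sF x (l+1) n ⊆ sF x l n := by
  intro p hp
  rw [mem_sF] at hp ⊢
  exact ⟨hp.1, hp.2.1, fun h hh => hp.2.2 h (by omega)⟩

lemma Kset_card (x : ℕ → Bool) (l : ℕ) (hl : 1 ≤ l) (n : ℕ) :
    (Set.ncard (Kset x l ∩ {p : ℕ × ℕ | p.1 < n ∧ p.2 < n}) : ℝ)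
      = (sF x l (n-1)).card - (sF x (l+1) (n-1)).card := by
  have hinj : Function.Injective (fun p : ℕ × ℕ => (p.1+1, p.2+1)) := by
    rintro ⟨i, j⟩ ⟨i', j'⟩ h
    simpa using h
  have : Kset x l ∩ {p : ℕ × ℕ | p.1 < n ∧ p.2 < n}
      = (((sF x l (n-1) \ sF x (l+1) (n-1)).image (fun p : ℕ × ℕ => (p.1+1, p.2+1)) :
        Finset (ℕ × ℕ)) : Set (ℕ × ℕ)) := by
    ext ⟨i, j⟩
    rw [mem_coe, mem_image]
    simp only [Finset.mem_sdiff, mem_sF]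
    constructor
    · rintro ⟨⟨h1, h2, _, h3, h4, h5, h6⟩, h7, h8⟩
      simp only at h1 h2 h3 h4 h5 h6 h7 h8
      refine ⟨(i-1, j-1), ⟨⟨⟨by simp only; omega, by simp only; omega⟩, h5 h1 h2, ?_⟩, ?_⟩, ?_⟩
      · simp only
        rw [Nat.sub_add_cancel h1, Nat.sub_add_cancel h2]
        exact h4
      · rintro ⟨_, _, h⟩
        simp only at h
        rw [Nat.sub_add_cancel h1, Nat.sub_add_cancel h2] at h
        exact h6 (h l (by omega))
      · simp only [Prod.mk.injEq]; omega
    · rintro ⟨⟨a, b⟩, ⟨⟨⟨h1, h2⟩, h3, h4⟩, h5⟩, h6⟩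
      simp only [Prod.mk.injEq] at h1 h2 h3 h4 h5 h6
      obtain ⟨rfl, rfl⟩ := h6
      have hne : a ≠ b := fun h => h3 (by rw [h])
      refine ⟨⟨by simp, by simp, hl, by simpa using hne, h4, by simpa using h3, fun he => ?_⟩,
        by simp only; omega, by simp only; omega⟩
      refine h5 ⟨⟨h1, h2⟩, h3, fun h hh => ?_⟩
      rcases Nat.lt_succ_iff_lt_or_eq.1 hh with h' | rfl
      · exact h4 h h'
      · exact he
  rw [this, Set.ncard_coe_finset, card_image_of_injective _ hinj,
    card_sdiff_of_subset (sF_anti x l _), Nat.cast_sub (card_le_card (sF_anti x l _))]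

lemma final (x : ℕ → Bool)
    (E : ℕ → ℝ)
    (hE : ∀ l, Tendsto (fun n : ℕ => ((sF x l n).card : ℝ) / (n:ℝ)^2) atTop (𝓝 (E l)))
    (hpos : ∀ l, 0 < E l) (ℓ : ℕ) (hℓ : 1 ≤ ℓ) :
    ∃ dK : ℕ → ℝ,
      (∀ l : ℕ, 1 ≤ l → HasDens (Kset x l) (dK l)) ∧
      Tendsto (fun n : ℕ => Pline seqDist shift x n (1/2 : ℝ) ℓ) atTop (𝓝 (dK ℓ)) ∧
      Summable (fun k : ℕ => dK (ℓ + k)) ∧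
      0 < ∑' k : ℕ, dK (ℓ + k) ∧
      Tendsto (fun n : ℕ => PlineGe seqDist shift x n (1/2 : ℝ) ℓ) atTop
        (𝓝 (∑' k : ℕ, dK (ℓ + k))) ∧
      {l : ℕ | 1 ≤ l ∧ 0 < dK l}.Infinite := by
  have hanti : ∀ l, E (l+1) ≤ E l := fun l =>
    le_of_tendsto_of_tendsto' (hE (l+1)) (hE l) fun n => by
      gcongr
      exact sF_anti x l n
  have hbd : ∀ l, E l * l ≤ 1 := by
    intro l
    have h1 := (hE l).mul_const (l:ℝ)
    have h2 : Tendsto (fun n : ℕ => (1 + (l:ℝ) / n)^2) atTop (𝓝 1) := by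
      simpa using ((tendsto_const_div_atTop_nhds_zero_nat (l:ℝ)).const_add 1).pow 2
    refine le_of_tendsto_of_tendsto h1 h2 ?_
    filter_upwards [eventually_gt_atTop 0] with n hn
    have hn' : (0:ℝ) < n := by exact_mod_cast hn
    have : (1 + (l:ℝ) / n)^2 = (n + l)^2 / (n:ℝ)^2 := by field_simp
    rw [this, div_mul_eq_mul_div]
    gcongr
    exact_mod_cast sF_bound x l n
  have hE0 : Tendsto E atTop (𝓝 0) := by
    refine squeeze_zero' (Eventually.of_forall fun l => (hpos l).le) ?_
      (tendsto_const_div_atTop_nhds_zero_nat (1:ℝ))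
    filter_upwards [eventually_gt_atTop 0] with l hl
    rw [le_div_iff₀ (by exact_mod_cast hl)]
    exact hbd l
  have hsum : HasSum (fun k : ℕ => E (ℓ + k) - E (ℓ + k + 1)) (E ℓ) := by
    rw [hasSum_iff_tendsto_nat_of_nonneg (fun k => sub_nonneg.2 (hanti _))]
    have : ∀ n, ∑ k ∈ range n, (E (ℓ + k) - E (ℓ + k + 1)) = E ℓ - E (ℓ + n) := by
      intro n
      exact sum_range_sub' (fun k => E (ℓ + k)) n
    simp_rw [this]
    have h2 : Tendsto (fun n => E (ℓ + n)) atTop (𝓝 0) := by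
      have := hE0.comp (tendsto_add_atTop_nat ℓ)
      refine this.congr fun n => ?_
      simp [add_comm]
    simpa using h2.const_sub (E ℓ)
  refine ⟨fun l => E l - E (l+1), ?_, ?_, hsum.summable, ?_, ?_, ?_⟩
  · intro l hl
    unfold HasDens densCount
    simp_rw [Kset_card x l hl, sub_div]
    exact (shifted (fun n => ((sF x l n).card : ℝ)) _ (hE l) 1).sub
      (shifted (fun n => ((sF x (l+1) n).card : ℝ)) _ (hE (l+1)) 1)
  · unfold Pline
    simp_rw [Nlines_eq x _ ℓ hℓ, sub_div]
    exact (tF_tendsto x ℓ _ (hE ℓ)).sub (tF_tendsto x (ℓ+1) _ (hE (ℓ+1)))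
  · rw [hsum.tsum_eq]; exact hpos ℓ
  · rw [hsum.tsum_eq]
    simp_rw [PlineGe_eq x _ ℓ hℓ]
    exact tF_tendsto x ℓ _ (hE ℓ)
  · intro hfin
    obtain ⟨N, hN⟩ := hfin.bddAbove
    have hc : ∀ k, E (N + 1 + k) = E (N + 1) := by
      intro k
      induction k with
      | zero => rfl
      | succ k ih =>
        rw [← ih]
        by_contra hne
        have hlt : E (N + 1 + k + 1) < E (N + 1 + k) := lt_of_le_of_ne (hanti _) hne
        have : N + 1 + k ≤ N := hN ⟨by omega, sub_pos.2 hlt⟩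
        omega
    have h2 : Tendsto (fun k => E (N + 1 + k)) atTop (𝓝 0) := by
      have := hE0.comp (tendsto_add_atTop_nat (N+1))
      refine this.congr fun n => ?_
      simp [add_comm]
    simp_rw [hc] at h2
    have := tendsto_nhds_unique h2 tendsto_const_nhds
    have := hpos (N+1)
    linarith

/-! combinatorics on words -/

lemma exists_special (x : ℕ → Bool)
    (y : ℕ → Bool) (hy : ∀ n : ℕ, ∃ p, ∀ t < n, y t = x (p + t))
    (hyap : ∀ p : ℕ, 1 ≤ p → ∃ i : ℕ, y (i + p) ≠ y i) (l : ℕ) : ∃ p, SS x l p := by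
  by_contra hno
  push Not at hno
  have hdet : ∀ i j, (∀ h < l, y (i + 1 + h) = y (j + 1 + h)) → y i = y j := by
    intro i j h
    obtain ⟨p, hp⟩ := hy (i + j + l + 2)
    by_contra hne
    refine hno (p + i, p + j) ⟨?_, fun t ht => ?_⟩
    · simp only
      rw [← hp i (by omega), ← hp j (by omega)]; exact hne
    · have := h t ht
      rw [hp _ (by omega), hp _ (by omega)] at this
      simp only
      convert this using 2 <;> ring
  set M := Fintype.card (Fin l → Bool) with hM
  choose! a ha using hyap
  set N := (range (M+1)).sup a with hN
  obtain ⟨u, v, huv, he⟩ := Fintype.exists_ne_map_eq_of_card_lt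
    (fun t : Fin (M+1) => W y l (N + 1 + t)) (by simp [hM])
  wlog hlt : u < v generalizing u v
  · exact this v u huv.symm he.symm (lt_of_le_of_ne (not_lt.1 hlt) huv.symm)
  have hlt' : (u:ℕ) < v := hlt
  have hu := u.2
  have hv := v.2
  set p := (v:ℕ) - u with hp
  have hback : ∀ t, t ≤ N + 1 + u → ∀ h < l, y (N + 1 + u - t + h) = y (N + 1 + v - t + h) := by
    intro t
    induction t with
    | zero =>
      intro _ h hh
      exact congrFun he ⟨h, hh⟩
    | succ t ih =>
      intro ht h hh
      have ih' := ih (by omega)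
      rcases Nat.eq_zero_or_pos h with rfl | hpos
      · apply hdet
        intro h hh
        have := ih' h hh
        convert this using 2 <;> omega
      · have := ih' (h-1) (by omega)
        convert this using 2 <;> omega
  have haN : a p ≤ N := le_sup (f := a) (mem_range.2 (by omega))
  apply ha p (by omega)
  symm
  apply hdet
  intro h hh
  have := hback (N + 1 + u - (a p + 1)) (by omega) h hh
  convert this using 2 <;> omega

def blk (x : ℕ → Bool) (i m : ℕ) : List Bool := (List.range m).map fun t => x (i + t)

lemma substWord_append (ζ : Bool → List Bool) (u v : List Bool) :
    substWord ζ (u ++ v) = substWord ζ u ++ substWord ζ v := by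
  induction u with
  | nil => rfl
  | cons a u ih =>
    show ζ a ++ substWord ζ (u ++ v) = (ζ a ++ substWord ζ u) ++ substWord ζ v
    rw [ih, List.append_assoc]

lemma blk_add (x : ℕ → Bool) (i m k : ℕ) : blk x i (m + k) = blk x i m ++ blk x (i + m) k := by
  simp [blk, List.range_add, add_assoc]

lemma blk_zeta (ζ : Bool → List Bool) (q : ℕ) (hlen : ∀ a, (ζ a).length = q)
    (x : ℕ → Bool) (hg : ∀ s r, r < q → x (q * s + r) = (ζ (x s)).getD r false) (s : ℕ) :
    ζ (x s) = blk x (q * s) q := by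
  apply List.ext_getElem
  · simp [blk, hlen]
  · intro r h1 h2
    rw [hlen] at h1
    simp only [blk, List.getElem_map, List.getElem_range]
    rw [hg s r h1]
    simp [hlen, h1]

lemma blk_subst (ζ : Bool → List Bool) (q : ℕ) (hlen : ∀ a, (ζ a).length = q)
    (x : ℕ → Bool) (hg : ∀ s r, r < q → x (q * s + r) = (ζ (x s)).getD r false) (i m : ℕ) :
    substWord ζ (blk x i m) = blk x (q * i) (q * m) := by
  induction m with
  | zero => rfl
  | succ m ih =>
    rw [blk_add, substWord_append, ih, Nat.mul_succ, blk_add, ← Nat.mul_add]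
    congr 1
    have : blk x (i + m) 1 = [x (i + m)] := by simp [blk]
    rw [this, ← blk_zeta ζ q hlen x hg]
    simp [substWord]

lemma blk_iter (ζ : Bool → List Bool) (q : ℕ) (hlen : ∀ a, (ζ a).length = q)
    (x : ℕ → Bool) (hg : ∀ s r, r < q → x (q * s + r) = (ζ (x s)).getD r false) (i k : ℕ) :
    (substWord ζ)^[k] [x i] = blk x (q ^ k * i) (q ^ k) := by
  induction k with
  | zero => simp [blk]
  | succ k ih =>
    rw [Function.iterate_succ_apply', ih, blk_subst ζ q hlen x hg]
    congr 1 <;> ring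

end RQAProof

/-- P_ℓ(x,∞,ε₀) = dens(K_ℓ) and P≥_ℓ(x,∞,ε₀) = Σ_{l≥ℓ} dens(K_l) > 0;
moreover dens(K_ℓ) > 0 for infinitely many ℓ. -/
theorem Pline_eq_densK
    (ζ : Bool → List Bool) (q : ℕ) (hζ : IsConstLenSubst ζ q)
    (hprim : IsPrimitive ζ) (hap : IsAperiodic ζ)
    (hζ0 : (ζ false).head? = some false)
    (x : ℕ → Bool) (hx0 : x 0 = false) (hxfix : substSeq ζ q x = x)
    (ℓ : ℕ) (hℓ : 1 ≤ ℓ) :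
    ∃ dK : ℕ → ℝ,
      (∀ l : ℕ, 1 ≤ l → HasDens (Kset x l) (dK l)) ∧
      Tendsto (fun n : ℕ => Pline seqDist shift x n (1/2 : ℝ) ℓ) atTop (𝓝 (dK ℓ)) ∧
      Summable (fun k : ℕ => dK (ℓ + k)) ∧
      0 < ∑' k : ℕ, dK (ℓ + k) ∧
      Tendsto (fun n : ℕ => PlineGe seqDist shift x n (1/2 : ℝ) ℓ) atTop
        (𝓝 (∑' k : ℕ, dK (ℓ + k))) ∧
      {l : ℕ | 1 ≤ l ∧ 0 < dK l}.Infinite := by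
  obtain ⟨hq, hlen⟩ := hζ
  have hg : ∀ s r, r < q → x (q * s + r) = (fun r a => (ζ a).getD r false) r (x s) := by
    intro s r hr
    conv_lhs => rw [← hxfix]
    simp only [substSeq]
    rw [Nat.mul_add_div (by omega), Nat.div_eq_of_lt hr, Nat.mul_add_mod, Nat.mod_eq_of_lt hr,
      add_zero]
  have h0 : (ζ false).getD 0 false = false := by
    cases h : ζ false with
    | nil => simp
    | cons a u => rw [h] at hζ0; simpa using hζ0
  obtain ⟨k₀, hk₀, hk⟩ := hprim
  have h1 : ∃ r < q, (ζ true).getD r false = false := by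
    by_contra hno
    push Not at hno
    have hall : ∀ b ∈ ζ true, b = true := by
      intro b hb
      obtain ⟨r, hr, rfl⟩ := List.getElem_of_mem hb
      have := hno r (by rw [← hlen true]; exact hr)
      simpa [hr] using this
    have hit : ∀ k, ∀ b ∈ (substWord ζ)^[k] [true], b = true := by
      intro k
      induction k with
      | zero => simp
      | succ k ih =>
        rw [Function.iterate_succ_apply']
        have : ∀ w : List Bool, (∀ b ∈ w, b = true) → ∀ b ∈ substWord ζ w, b = true := by
          intro w
          induction w with
          | nil => intro _ b hb; simp [substWord] at hb
          | cons a u ihu =>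
            intro hw b hb
            have hb' : b ∈ ζ a ++ substWord ζ u := hb
            rw [List.mem_append] at hb'
            rcases hb' with hb' | hb'
            · rw [hw a (by simp)] at hb'
              exact hall b hb'
            · exact ihu (fun c hc => hw c (by simp [hc])) b hb'
        exact this _ ih
    have := hit k₀ false (hk true false)
    simp at this
  obtain ⟨f, hf0, hf⟩ := RQAProof.letters x q hq (fun r a => (ζ a).getD r false) hg h0 h1
  have hex : ∀ l, ∃ p, RQAProof.SS x l p := by
    obtain ⟨y, hyX, hyap⟩ := hap
    refine fun l => RQAProof.exists_special x y ?_ hyap l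
    have hocc : ∀ a, ∃ i, x i = a := by
      intro a
      cases a
      · exact ⟨0, hx0⟩
      · have := hk false true
        rw [← hx0, RQAProof.blk_iter ζ q hlen x hg] at this
        simp only [RQAProof.blk, List.mem_map] at this
        obtain ⟨t, _, ht⟩ := this
        exact ⟨_, ht⟩
    intro n
    obtain ⟨a, k, _, hinf⟩ := hyX n
    obtain ⟨i, rfl⟩ := hocc a
    rw [RQAProof.blk_iter ζ q hlen x hg] at hinf
    obtain ⟨u, v, huv⟩ := hinf
    refine ⟨q ^ k * i + u.length, fun t ht => ?_⟩
    have hl := congrArg List.length huv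
    simp [RQAProof.blk] at hl
    have h2 := congrArg (fun w => w[u.length + t]?) huv
    simp only [RQAProof.blk, List.append_assoc] at h2
    rw [List.getElem?_append_right (by omega), List.getElem?_append_left (by simp; omega)] at h2
    have hlt : u.length + t < q ^ k := by omega
    simp [ht, hlt] at h2
    rw [h2, add_assoc]
  have hE := RQAProof.sF_tendsto x (fun m w => RQAProof.freq_exists x q hq (fun r a => (ζ a).getD r false) hg f hf w)
    (fun m i c hc => RQAProof.freq_pos x hx0 q hq (fun r a => (ζ a).getD r false) hg f hf0 hf i c hc)
  choose E hE1 hE2 using hE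
  exact RQAProof.final x E hE1 (fun l => hE2 l (hex l)) ℓ hℓ
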